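/- Consider the dynamic discrete choice model with finite state space X = {1,…,K}, and let F₀ be a probability distribution on ℝ^J with finite first moments whose density is positive everywhere on ℝ^J. Then there exists a finite mixture of Gumbel distributions F, i.e., F with density Σ_{k=1}^m ω_k φ(·; μ_k, σ) for some m ∈ ℤ⁺, weights ω_k > 0 summing to 1, locations μ_k ∈ ℝ^J and a common scale σ > 0, such that the conditional choice probabilities coincide: p(d|x;F₀) = p(d|x;F) for all d ∈ {0,1,…,J} and all x ∈ X. -/

import Mathlib

open MeasureTheory Real

/-- The standardized univariate Gumbel density `φ(z) = exp(−z − γ − e^{−(z+γ)})`. -/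
noncomputable def gumbelPdf (z : ℝ) : ℝ :=
  Real.exp (-z - Real.eulerMascheroniConstant - Real.exp (-(z + Real.eulerMascheroniConstant)))

/-- The multivariate Gumbel density `φ(z; μ, σ) = ∏_j (1/σ) φ((z_j − μ_j)/σ)`. -/
noncomputable def mGumbelPdf {J : ℕ} (μ : Fin J → ℝ) (σ : ℝ) (z : Fin J → ℝ) : ℝ :=
  ∏ j, (1 / σ) * gumbelPdf ((z j - μ j) / σ)

/-- Extension of the shock vector `ε ∈ ℝ^J` by the normalization `ε₀ = 0`. -/
noncomputable def epsExt {J : ℕ} (z : Fin J → ℝ) : Fin (J + 1) → ℝ := Fin.cases 0 z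

open Filter Topology

/-! ### Gumbel densities -/

lemma gumbelPdf_nonneg (z : ℝ) : 0 ≤ gumbelPdf z := (Real.exp_pos _).le

lemma continuous_gumbelPdf : Continuous gumbelPdf := by
  unfold gumbelPdf
  fun_prop

lemma gumbelPdf_le_exp_neg_abs (z : ℝ) :
    gumbelPdf z ≤ 2 * Real.exp (-|z + Real.eulerMascheroniConstant|) := by
  unfold gumbelPdf
  set t := z + Real.eulerMascheroniConstant with ht
  have e : -z - Real.eulerMascheroniConstant = -t := by rw [ht]; ring
  rw [e]
  rcases le_total 0 t with h | h
  · rw [abs_of_nonneg h]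
    have : Real.exp (-t - Real.exp (-t)) ≤ Real.exp (-t) :=
      Real.exp_le_exp.2 (by linarith [Real.exp_pos (-t)])
    linarith [Real.exp_pos (-t)]
  · rw [abs_of_nonpos h, neg_neg]
    have h2 := Real.pow_div_factorial_le_exp (Real.exp (-t)) (Real.exp_pos _).le 2
    have h3 : Real.exp (-t) * Real.exp t = 1 := by rw [← Real.exp_add]; simp
    rw [Real.exp_sub, div_le_iff₀ (Real.exp_pos _)]
    norm_num at h2
    calc Real.exp (-t) = Real.exp t * (Real.exp (-t) * Real.exp (-t)) := by
          linear_combination (-Real.exp (-t)) * h3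
      _ ≤ Real.exp t * (2 * Real.exp (Real.exp (-t))) := by
          refine mul_le_mul_of_nonneg_left ?_ (Real.exp_pos t).le
          nlinarith
      _ = _ := by ring

lemma one_add_abs_mul_gumbelPdf_le (z : ℝ) :
    (1 + |z|) * gumbelPdf z ≤ 2 * (11 + 4 * |Real.eulerMascheroniConstant|) *
      (1 + (z + Real.eulerMascheroniConstant) ^ 2)⁻¹ := by
  have h := gumbelPdf_le_exp_neg_abs z
  set c := Real.eulerMascheroniConstant
  set s := |z + c| with hs
  have hs0 : 0 ≤ s := abs_nonneg _
  have hz : |z| ≤ s + |c| := by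
    have := abs_sub (z + c) c
    simpa using this
  have h1 := Real.pow_div_factorial_le_exp s hs0 1
  have h2 := Real.pow_div_factorial_le_exp s hs0 2
  have h3 := Real.pow_div_factorial_le_exp s hs0 3
  have h0 : 1 ≤ Real.exp s := Real.one_le_exp hs0
  norm_num [Nat.factorial] at h1 h2 h3
  have hc : 0 ≤ |c| := abs_nonneg c
  rw [← sq_abs (z + c), ← hs, ← div_eq_mul_inv, le_div_iff₀ (by positivity)]
  have key : (1 + |z|) * (1 + s ^ 2) ≤ (11 + 4 * |c|) * Real.exp s := by
    calc (1 + |z|) * (1 + s ^ 2) ≤ (1 + (s + |c|)) * (1 + s ^ 2) := by gcongr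
      _ = (1 + s + s ^ 2 + s ^ 3) + |c| * (1 + s ^ 2) := by ring
      _ ≤ 11 * Real.exp s + |c| * (4 * Real.exp s) := by
          gcongr <;> linarith
      _ = _ := by ring
  calc (1 + |z|) * gumbelPdf z * (1 + s ^ 2)
      ≤ (1 + |z|) * (2 * Real.exp (-s)) * (1 + s ^ 2) := by gcongr
    _ = 2 * ((1 + |z|) * (1 + s ^ 2)) * Real.exp (-s) := by ring
    _ ≤ 2 * ((11 + 4 * |c|) * Real.exp s) * Real.exp (-s) := by gcongr
    _ = 2 * (11 + 4 * |c|) * (Real.exp s * Real.exp (-s)) := by ring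
    _ = _ := by rw [← Real.exp_add]; simp

lemma integrable_one_add_abs_mul_gumbelPdf :
    Integrable fun z : ℝ => (1 + |z|) * gumbelPdf z := by
  refine Integrable.mono' ((integrable_inv_one_add_sq.comp_add_right
    Real.eulerMascheroniConstant).const_mul (2 * (11 + 4 * |Real.eulerMascheroniConstant|)))
    ?_ (ae_of_all _ fun z => ?_)
  · exact (Continuous.mul (by fun_prop) continuous_gumbelPdf).aestronglyMeasurable
  · rw [Real.norm_of_nonneg (mul_nonneg (by positivity) (gumbelPdf_nonneg z))]
    exact one_add_abs_mul_gumbelPdf_le z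

lemma integrable_gumbelPdf : Integrable gumbelPdf := by
  refine integrable_one_add_abs_mul_gumbelPdf.mono' continuous_gumbelPdf.aestronglyMeasurable
    (ae_of_all _ fun z => ?_)
  rw [Real.norm_of_nonneg (gumbelPdf_nonneg z)]
  nlinarith [gumbelPdf_nonneg z, abs_nonneg z]

lemma integral_gumbelPdf : ∫ z, gumbelPdf z = 1 := by
  have h := integral_of_hasDerivAt_of_tendsto
    (f := fun z => Real.exp (-Real.exp (-(z + Real.eulerMascheroniConstant))))
    (f' := gumbelPdf) (m := 0) (n := 1) (fun z => ?_) integrable_gumbelPdf ?_ ?_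
  · simpa using h
  · have h1 : HasDerivAt (fun z : ℝ => -(z + Real.eulerMascheroniConstant)) (-1) z :=
      ((hasDerivAt_id z).add_const _).neg
    have h2 := h1.exp.neg.exp
    have e : gumbelPdf z = Real.exp (-Real.exp (-(z + Real.eulerMascheroniConstant))) *
        -(Real.exp (-(z + Real.eulerMascheroniConstant)) * -1) := by
      rw [mul_neg_one, neg_neg, ← Real.exp_add, gumbelPdf]
      ring_nf
    rw [e]
    exact h2
  · refine Real.tendsto_exp_atBot.comp (tendsto_neg_atTop_atBot.comp
      (Real.tendsto_exp_atTop.comp (tendsto_neg_atBot_atTop.comp ?_)))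
    exact tendsto_atBot_add_const_right _ _ tendsto_id
  · have h1 : Tendsto (fun z : ℝ => -Real.exp (-(z + Real.eulerMascheroniConstant)))
        atTop (𝓝 (-0)) := by
      refine Tendsto.neg (Real.tendsto_exp_atBot.comp (tendsto_neg_atTop_atBot.comp ?_))
      exact tendsto_atTop_add_const_right _ _ tendsto_id
    have h2 := (Real.continuous_exp.tendsto (-0)).comp h1
    rwa [neg_zero, Real.exp_zero] at h2

section Multivariate

variable {J : ℕ}

lemma mGumbelPdf_zero_one (y : Fin J → ℝ) : mGumbelPdf 0 1 y = ∏ j, gumbelPdf (y j) := by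
  simp [mGumbelPdf]

lemma mGumbelPdf_nonneg (μ : Fin J → ℝ) {σ : ℝ} (hσ : 0 < σ) (z : Fin J → ℝ) :
    0 ≤ mGumbelPdf μ σ z :=
  Finset.prod_nonneg fun _ _ => mul_nonneg (by positivity) (gumbelPdf_nonneg _)

lemma continuous_mGumbelPdf (μ : Fin J → ℝ) (σ : ℝ) : Continuous (mGumbelPdf μ σ) := by
  unfold mGumbelPdf
  refine continuous_finsetProd _ fun j _ => continuous_const.mul (continuous_gumbelPdf.comp ?_)
  fun_prop

lemma mGumbelPdf_eq_standard (μ : Fin J → ℝ) (σ : ℝ) (z : Fin J → ℝ) :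
    mGumbelPdf μ σ z = (σ⁻¹) ^ J * mGumbelPdf 0 1 (σ⁻¹ • (z - μ)) := by
  rw [mGumbelPdf_zero_one, mGumbelPdf, Finset.prod_mul_distrib]
  simp [div_eq_inv_mul]

lemma one_add_norm_le_prod (y : Fin J → ℝ) : 1 + ‖y‖ ≤ ∏ j, (1 + |y j|) := by
  have hprod : ∀ s : Finset (Fin J), (1 : ℝ) ≤ ∏ j ∈ s, (1 + |y j|) := fun s =>
    Finset.prod_induction _ (fun x => 1 ≤ x) (fun _ _ => one_le_mul_of_one_le_of_one_le) le_rfl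
      fun j _ => by linarith [abs_nonneg (y j)]
  have hone : (1 : ℝ) ≤ ∏ j, (1 + |y j|) :=
    hprod Finset.univ
  have h : ‖y‖ ≤ ∏ j, (1 + |y j|) - 1 := by
    refine (pi_norm_le_iff_of_nonneg (by linarith)).2 fun i => ?_
    rw [Real.norm_eq_abs, le_sub_iff_add_le', ← Finset.mul_prod_erase _ _ (Finset.mem_univ i)]
    exact le_mul_of_one_le_right (by positivity) (hprod _)
  linarith

lemma integrable_one_add_norm_mul_mGumbelPdf_standard :
    Integrable fun y : Fin J → ℝ => (1 + ‖y‖) * mGumbelPdf 0 1 y := by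
  have h : Integrable fun y : Fin J → ℝ => ∏ j, ((1 + |y j|) * gumbelPdf (y j)) :=
    Integrable.fintype_prod (f := fun (_ : Fin J) z => (1 + |z|) * gumbelPdf z)
      fun _ => integrable_one_add_abs_mul_gumbelPdf
  refine h.mono' (Continuous.mul (by fun_prop)
    (continuous_mGumbelPdf 0 1)).aestronglyMeasurable (ae_of_all _ fun y => ?_)
  have h0 := mGumbelPdf_nonneg 0 one_pos y
  rw [Real.norm_of_nonneg (by positivity), Finset.prod_mul_distrib, ← mGumbelPdf_zero_one]
  gcongr
  exact one_add_norm_le_prod y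

lemma integral_mGumbelPdf_standard : ∫ y : Fin J → ℝ, mGumbelPdf 0 1 y = 1 := by
  simp_rw [mGumbelPdf_zero_one]
  rw [integral_fintype_prod_volume_eq_prod (fun (_ : Fin J) => gumbelPdf)]
  simp [integral_gumbelPdf]

lemma mul_mGumbelPdf_eq_comp (g : (Fin J → ℝ) → ℝ) (μ : Fin J → ℝ) {σ : ℝ} (hσ : 0 < σ) :
    (fun z => g z * mGumbelPdf μ σ z) = fun z => (σ⁻¹) ^ J *
      (fun w => (fun y => g (μ + σ • y) * mGumbelPdf 0 1 y) (σ⁻¹ • w)) (z - μ) := by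
  funext z
  simp only [mGumbelPdf_eq_standard μ σ z, smul_inv_smul₀ hσ.ne', add_sub_cancel]
  ring

lemma integral_mul_mGumbelPdf (g : (Fin J → ℝ) → ℝ) (μ : Fin J → ℝ) {σ : ℝ} (hσ : 0 < σ) :
    ∫ z, g z * mGumbelPdf μ σ z = ∫ y, g (μ + σ • y) * mGumbelPdf 0 1 y := by
  rw [mul_mGumbelPdf_eq_comp g μ hσ, integral_const_mul, integral_sub_right_eq_self
    (fun w => (fun y => g (μ + σ • y) * mGumbelPdf 0 1 y) (σ⁻¹ • w)),
    Measure.integral_comp_smul volume (fun y => g (μ + σ • y) * mGumbelPdf 0 1 y), Module.finrank_fin_fun, smul_eq_mul, ← mul_assoc,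
    abs_of_nonneg (by positivity), mul_inv_cancel₀ (by positivity), one_mul]

lemma integral_mGumbelPdf (μ : Fin J → ℝ) {σ : ℝ} (hσ : 0 < σ) :
    ∫ z, mGumbelPdf μ σ z = 1 := by
  simpa [integral_mGumbelPdf_standard] using integral_mul_mGumbelPdf (fun _ => 1) μ hσ

lemma norm_comp_affine_le {g : (Fin J → ℝ) → ℝ} {C : ℝ} (hC : ∀ z, |g z| ≤ C * (1 + ‖z‖))
    (μ y : Fin J → ℝ) {σ : ℝ} (hσ : 0 < σ) :
    |g (μ + σ • y)| ≤ C * (1 + ‖μ‖ + σ) * (1 + ‖y‖) := by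
  have hC0 : 0 ≤ C := by
    have := (abs_nonneg _).trans (hC 0)
    simpa using this
  refine (hC _).trans ?_
  rw [mul_assoc]
  refine mul_le_mul_of_nonneg_left ?_ hC0
  have h1 : ‖μ + σ • y‖ ≤ ‖μ‖ + σ * ‖y‖ := by
    refine (norm_add_le _ _).trans ?_
    rw [norm_smul, Real.norm_of_nonneg hσ.le]
  nlinarith [norm_nonneg μ, norm_nonneg y, mul_nonneg (norm_nonneg μ) (norm_nonneg y)]

lemma integrable_mul_mGumbelPdf {g : (Fin J → ℝ) → ℝ} (hg : Measurable g) {C : ℝ}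
    (hC : ∀ z, |g z| ≤ C * (1 + ‖z‖)) (μ : Fin J → ℝ) {σ : ℝ} (hσ : 0 < σ) :
    Integrable fun z => g z * mGumbelPdf μ σ z := by
  rw [mul_mGumbelPdf_eq_comp g μ hσ]
  refine Integrable.const_mul (Integrable.comp_sub_right
    ((integrable_comp_smul_iff volume _ (inv_ne_zero hσ.ne')).2 ?_) μ) _
  refine (integrable_one_add_norm_mul_mGumbelPdf_standard.const_mul
    (C * (1 + ‖μ‖ + σ))).mono' ?_ (ae_of_all _ fun y => ?_)
  · exact ((hg.comp (by fun_prop)).mul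
      (continuous_mGumbelPdf 0 1).measurable).aestronglyMeasurable
  · have h0 := mGumbelPdf_nonneg 0 one_pos y
    rw [norm_mul, Real.norm_of_nonneg h0, ← mul_assoc]
    exact mul_le_mul_of_nonneg_right (norm_comp_affine_le hC μ y hσ) h0

/-- Gumbel densities with vanishing scale form an approximate identity. -/
lemma tendsto_integral_mul_mGumbelPdf {g : (Fin J → ℝ) → ℝ} (hg : Measurable g) {C : ℝ}
    (hC : ∀ z, |g z| ≤ C * (1 + ‖z‖)) {μ : Fin J → ℝ} (hcont : ContinuousAt g μ) :
    Tendsto (fun n : ℕ => ∫ z, g z * mGumbelPdf μ (1 / ((n : ℝ) + 1)) z) atTop (𝓝 (g μ)) := by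
  have hpos : ∀ n : ℕ, 0 < 1 / ((n : ℝ) + 1) := fun n => by positivity
  have hlim : ∫ y : Fin J → ℝ, g μ * mGumbelPdf 0 1 y = g μ := by
    rw [integral_const_mul, integral_mGumbelPdf_standard, mul_one]
  simp_rw [fun n => integral_mul_mGumbelPdf g μ (hpos n)]
  rw [← hlim]
  refine tendsto_integral_of_dominated_convergence
    (fun y => C * (1 + ‖μ‖ + 1) * ((1 + ‖y‖) * mGumbelPdf 0 1 y)) (fun n => ?_)
    (integrable_one_add_norm_mul_mGumbelPdf_standard.const_mul _)
    (fun n => ae_of_all _ fun y => ?_) (ae_of_all _ fun y => ?_)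
  · exact ((hg.comp (by fun_prop)).mul
      (continuous_mGumbelPdf 0 1).measurable).aestronglyMeasurable
  · have h0 := mGumbelPdf_nonneg 0 one_pos y
    have hC0 : 0 ≤ C := by
      have := (abs_nonneg _).trans (hC 0)
      simpa using this
    rw [norm_mul, Real.norm_of_nonneg h0, ← mul_assoc]
    refine mul_le_mul_of_nonneg_right ((norm_comp_affine_le hC μ y (hpos n)).trans ?_) h0
    gcongr
    rw [div_le_one (by positivity)]
    linarith [(Nat.cast_nonneg n : (0 : ℝ) ≤ n)]
  · refine Tendsto.mul_const _ (hcont.tendsto.comp ?_)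
    have := (tendsto_one_div_add_atTop_nhds_zero_nat (𝕜 := ℝ)).smul_const y
    simpa using this.const_add μ

end Multivariate

/-! ### Separation from convex hulls -/

section Separation

variable {E : Type*} [NormedAddCommGroup E] [InnerProductSpace ℝ E]

lemma exists_unit_inner_nonneg_of_finite {s : Set E} (hs : s.Finite) (hne : s.Nonempty)
    (h0 : (0 : E) ∉ convexHull ℝ s) {W : Submodule ℝ E} (hW : s ⊆ W) :
    ∃ l ∈ W, ‖l‖ = 1 ∧ ∀ c ∈ s, 0 ≤ inner ℝ l c := by
  obtain ⟨v, hv, hmin⟩ := exists_norm_eq_iInf_of_complete_convex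
    (hne.convexHull (𝕜 := ℝ)) (hs.isCompact_convexHull ℝ).isComplete
    (convex_convexHull ℝ s) 0
  rw [norm_eq_iInf_iff_real_inner_le_zero (convex_convexHull ℝ s) hv] at hmin
  have hv0 : v ≠ 0 := fun h => h0 (h ▸ hv)
  refine ⟨‖v‖⁻¹ • v, W.smul_mem _ (convexHull_min hW W.convex hv),
    norm_smul_inv_norm hv0, fun c hc => ?_⟩
  have h := hmin c (subset_convexHull ℝ s hc)
  rw [zero_sub, inner_neg_left, inner_sub_right] at h
  rw [inner_smul_left]
  refine mul_nonneg (by simp) ?_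
  linarith [real_inner_self_nonneg (x := v)]

/-- If the convex hulls of the ranges of `T n` avoid the origin and `T n` converges pointwise on
`D` to `h`, then a closed half space through the origin contains `h '' D`. -/
lemma exists_unit_inner_nonneg_of_tendsto [FiniteDimensional ℝ E] {α : Type*} [Nonempty α]
    {D : Set α} {h : α → E} {T : ℕ → α → E} {W : Submodule ℝ E}
    (hT : ∀ z ∈ D, Tendsto (fun n => T n z) atTop (𝓝 (h z))) (hW : ∀ n z, T n z ∈ W)
    (h0 : ∀ n, (0 : E) ∉ convexHull ℝ (Set.range (T n))) :
    ∃ l ∈ W, ‖l‖ = 1 ∧ ∀ z ∈ D, 0 ≤ inner ℝ l (h z) := by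
  classical
  have := FiniteDimensional.proper_real E
  have hcomp : IsCompact (Metric.sphere (0 : E) 1 ∩ W) :=
    (isCompact_sphere _ _).inter_right W.closed_of_finiteDimensional
  obtain ⟨l, ⟨hl1, hlW⟩, hl⟩ := hcomp.inter_iInter_nonempty
    (fun z : D => {l : E | 0 ≤ inner ℝ l (h z)})
    (fun z => isClosed_le continuous_const (by fun_prop)) (fun u => by
      obtain ⟨z₀⟩ := ‹Nonempty α›
      have hex : ∀ n, ∃ l ∈ W, ‖l‖ = 1 ∧
          ∀ c ∈ T n '' (insert z₀ (u.image Subtype.val) : Finset α), 0 ≤ inner ℝ l c := fun n =>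
        exists_unit_inner_nonneg_of_finite ((Finset.finite_toSet _).image _)
          ⟨T n z₀, z₀, by simp, rfl⟩
          (fun hmem => h0 n (convexHull_mono (Set.image_subset_range _ _) hmem))
          (by rintro _ ⟨z, -, rfl⟩; exact hW n z)
      choose l hlW hl1 hl using hex
      obtain ⟨a, ha, k, hk, hlim⟩ := hcomp.tendsto_subseq (x := l)
        fun n => ⟨by simp [hl1], hlW n⟩
      refine ⟨a, ha, Set.mem_iInter₂.2 fun z hz => ?_⟩
      refine ge_of_tendsto' (hlim.inner (𝕜 := ℝ) ((hT z z.2).comp hk.tendsto_atTop)) fun n => ?_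
      refine hl _ _ ⟨z, ?_, rfl⟩
      simp only [Finset.coe_insert, Finset.coe_image, Set.mem_insert_iff]
      exact Or.inr ⟨z, hz, rfl⟩)
  exact ⟨l, hlW, by simpa using hl1, fun z hz => Set.mem_iInter.1 hl ⟨z, hz⟩⟩

end Separation

/-! ### Matching finitely many moments -/

section Moments

variable {J : ℕ}

lemma integrable_mul_of_linear_growth {f g : (Fin J → ℝ) → ℝ} (hf : Measurable f)
    (hpos : ∀ z, 0 < f z) (hint : Integrable f)
    (hmom : ∀ j, Integrable fun z : Fin J → ℝ => |z j| * f z) (hg : Measurable g) {C : ℝ}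
    (hC : ∀ z, |g z| ≤ C * (1 + ‖z‖)) : Integrable fun z => g z * f z := by
  have hsum : Integrable fun z : Fin J → ℝ => C * (f z + ∑ j, |z j| * f z) :=
    (hint.add (integrable_finsetSum _ fun j _ => hmom j)).const_mul C
  refine hsum.mono' (hg.mul hf).aestronglyMeasurable (ae_of_all _ fun z => ?_)
  have hC0 : 0 ≤ C := by
    have := (abs_nonneg _).trans (hC 0)
    simpa using this
  have hz : ‖z‖ ≤ ∑ j, |z j| :=
    (pi_norm_le_iff_of_nonneg (Finset.sum_nonneg fun _ _ => abs_nonneg _)).2 fun i =>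
      Finset.single_le_sum (f := fun j => |z j|) (fun _ _ => abs_nonneg _) (Finset.mem_univ i)
  rw [norm_mul, Real.norm_of_nonneg (hpos z).le, ← Finset.sum_mul]
  calc ‖g z‖ * f z ≤ C * (1 + ∑ j, |z j|) * f z := by
        refine mul_le_mul_of_nonneg_right ((hC z).trans ?_) (hpos z).le
        gcongr
    _ = _ := by ring

/-- Finitely many moments of a distribution with positive density, given by almost everywhere
continuous functions of linear growth, are matched exactly by a finite Gumbel mixture. -/
theorem exists_gumbel_mixture_matching {ι : Type*} [Fintype ι] {f : (Fin J → ℝ) → ℝ}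
    (hf : Measurable f) (hpos : ∀ z, 0 < f z) (hint : Integrable f) (hprob : ∫ z, f z = 1)
    (hmom : ∀ j, Integrable fun z : Fin J → ℝ => |z j| * f z)
    {g : ι → (Fin J → ℝ) → ℝ} (hg : ∀ i, Measurable (g i))
    (hgrowth : ∀ i, ∃ C, ∀ z, |g i z| ≤ C * (1 + ‖z‖))
    (hcont : ∀ i, ∀ᵐ z, ContinuousAt (g i) z) :
    ∃ (m : ℕ) (ω : Fin m → ℝ) (μ : Fin m → Fin J → ℝ) (σ : ℝ),
      1 ≤ m ∧ (∀ k, 0 < ω k) ∧ (∑ k, ω k = 1) ∧ 0 < σ ∧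
      ∀ i, ∫ z, g i z * f z = ∫ z, g i z * (∑ k, ω k * mGumbelPdf (μ k) σ z) := by
  choose C hC using hgrowth
  have hgf : ∀ i, Integrable fun z => g i z * f z := fun i =>
    integrable_mul_of_linear_growth hf hpos hint hmom (hg i) (hC i)
  have hgφ : ∀ i (μ : Fin J → ℝ) {σ : ℝ}, 0 < σ →
      Integrable fun z => g i z * mGumbelPdf μ σ z := fun i μ σ hσ =>
    integrable_mul_mGumbelPdf (hg i) (hC i) μ hσ
  have hφ : ∀ (μ : Fin J → ℝ) {σ : ℝ}, 0 < σ → Integrable fun z => mGumbelPdf μ σ z :=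
    fun μ σ hσ => by
      simpa using integrable_mul_mGumbelPdf (g := fun _ => (1 : ℝ)) measurable_const (C := 1)
        (fun z => by simp) μ hσ
  set M : ι → ℝ := fun i => ∫ z, g i z * f z with hM
  let h : (Fin J → ℝ) → EuclideanSpace ℝ ι := fun z => WithLp.toLp 2 fun i => g i z - M i
  let T : ℝ → (Fin J → ℝ) → EuclideanSpace ℝ ι := fun σ μ =>
    WithLp.toLp 2 fun i => (∫ z, g i z * mGumbelPdf μ σ z) - M i
  have hinner : ∀ (l : EuclideanSpace ℝ ι) z, inner ℝ l (h z) = ∑ i, (g i z - M i) * l i :=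
    fun l z => by simp [PiLp.inner_apply, h]
  have hinnerT : ∀ (l : EuclideanSpace ℝ ι) μ {σ : ℝ}, 0 < σ →
      inner ℝ l (T σ μ) = ∫ z, inner ℝ l (h z) * mGumbelPdf μ σ z := fun l μ σ hσ => by
    have e : ∀ z, inner ℝ l (h z) * mGumbelPdf μ σ z =
        ∑ i, l i * (g i z * mGumbelPdf μ σ z - M i * mGumbelPdf μ σ z) := fun z => by
      rw [hinner, Finset.sum_mul]
      exact Finset.sum_congr rfl fun i _ => by ring
    have hi : ∀ i ∈ Finset.univ, Integrable fun z =>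
        l i * (g i z * mGumbelPdf μ σ z - M i * mGumbelPdf μ σ z) :=
      fun i _ => ((hgφ i μ hσ).sub ((hφ μ hσ).const_mul (M i))).const_mul (l i)
    simp_rw [e]
    rw [integral_finsetSum _ hi]
    simp only [T, PiLp.inner_apply]
    refine Finset.sum_congr rfl fun i _ => ?_
    rw [integral_const_mul, integral_sub (hgφ i μ hσ) ((hφ μ hσ).const_mul _),
      integral_const_mul, integral_mGumbelPdf μ hσ]
    simp [mul_comm]
  have hinnerf : ∀ l : EuclideanSpace ℝ ι, Integrable (fun z => inner ℝ l (h z) * f z) ∧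
      ∫ z, inner ℝ l (h z) * f z = 0 := fun l => by
    have e : ∀ z, inner ℝ l (h z) * f z = ∑ i, l i * (g i z * f z - M i * f z) := fun z => by
      rw [hinner, Finset.sum_mul]
      exact Finset.sum_congr rfl fun i _ => by ring
    have hi : ∀ i ∈ Finset.univ, Integrable fun z => l i * (g i z * f z - M i * f z) :=
      fun i _ => ((hgf i).sub (hint.const_mul (M i))).const_mul (l i)
    simp_rw [e]
    refine ⟨integrable_finsetSum _ hi, ?_⟩
    rw [integral_finsetSum _ hi]
    refine Finset.sum_eq_zero fun i _ => ?_
    rw [integral_const_mul, integral_sub (hgf i) (hint.const_mul _), integral_const_mul, hprob]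
    simp [hM]
  let L : Submodule ℝ (EuclideanSpace ℝ ι) :=
    { carrier := {l | ∀ᵐ z, inner ℝ l (h z) = 0}
      add_mem' := fun {a b} ha hb => by
        change ∀ᵐ z, inner ℝ (a + b) (h z) = 0
        filter_upwards [ha, hb] with z h1 h2
        rw [inner_add_left, h1, h2, add_zero]
      zero_mem' := by simp
      smul_mem' := fun c a ha => by
        change ∀ᵐ z, inner ℝ (c • a) (h z) = 0
        filter_upwards [ha] with z h1
        rw [inner_smul_left, h1, mul_zero] }
  have hTW : ∀ μ {σ : ℝ}, 0 < σ → T σ μ ∈ Lᗮ := fun μ σ hσ => by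
    refine (Submodule.mem_orthogonal _ _).2 fun l hl => ?_
    rw [hinnerT l μ hσ]
    refine integral_eq_zero_of_ae ?_
    filter_upwards [hl] with z hz
    simp [hz]
  have hspos : ∀ n : ℕ, 0 < 1 / ((n : ℝ) + 1) := fun n => by positivity
  have hex : ∃ n : ℕ, (0 : EuclideanSpace ℝ ι) ∈
      convexHull ℝ (Set.range (T (1 / ((n : ℝ) + 1)))) := by
    by_contra! hno
    have hlim : ∀ z ∈ {z | ∀ i, ContinuousAt (g i) z},
        Tendsto (fun n : ℕ => T (1 / ((n : ℝ) + 1)) z) atTop (𝓝 (h z)) := fun z hz =>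
      ((PiLp.continuous_toLp 2 fun _ : ι => ℝ).tendsto _).comp (tendsto_pi_nhds.2 fun i =>
        (tendsto_integral_mul_mGumbelPdf (hg i) (hC i) (hz i)).sub_const (M i))
    obtain ⟨l, hlW, hl1, hl⟩ := exists_unit_inner_nonneg_of_tendsto
      (W := Lᗮ) hlim (fun n z => hTW z (hspos n)) hno
    have hnn : 0 ≤ᵐ[volume] fun z => inner ℝ l (h z) * f z := by
      filter_upwards [ae_all_iff.2 hcont] with z hz
      exact mul_nonneg (hl z hz) (hpos z).le
    have hzero := (integral_eq_zero_iff_of_nonneg_ae hnn (hinnerf l).1).1 (hinnerf l).2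
    have hlL : l ∈ L := by
      change ∀ᵐ z, inner ℝ l (h z) = 0
      filter_upwards [hzero] with z hz
      exact (mul_eq_zero.1 hz).resolve_right (hpos z).ne'
    have := (Submodule.mem_orthogonal _ _).1 hlW l hlL
    rw [real_inner_self_eq_norm_sq, hl1] at this
    norm_num at this
  obtain ⟨n, hn⟩ := hex
  set σ : ℝ := 1 / ((n : ℝ) + 1)
  have hσ : 0 < σ := hspos n
  obtain ⟨κ, _, z, w, hz, -, hw, hw1, hw0⟩ := eq_pos_convex_span_of_mem_convexHull hn
  choose μ hμ using fun k => hz ⟨k, rfl⟩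
  let e := (Fintype.equivFin κ).symm
  have hwe : ∑ k, w (e k) = 1 := by rw [e.sum_comp w, hw1]
  refine ⟨Fintype.card κ, fun k => w (e k), fun k => μ (e k), σ, ?_, fun k => hw _, hwe, hσ,
    fun i => ?_⟩
  · refine Nat.one_le_iff_ne_zero.2 fun h0 => ?_
    have := Fintype.card_eq_zero_iff.1 h0
    simp at hw1
  · have hsum : ∑ k, w (e k) * ((∫ z, g i z * mGumbelPdf (μ (e k)) σ z) - M i) = 0 := by
      rw [e.sum_comp fun k => w k * ((∫ z, g i z * mGumbelPdf (μ k) σ z) - M i)]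
      have := congrArg (fun v : EuclideanSpace ℝ ι => v i) hw0
      simpa [← hμ, T] using this
    simp_rw [mul_sub, Finset.sum_sub_distrib, ← Finset.sum_mul] at hsum
    rw [hwe, one_mul, sub_eq_zero] at hsum
    have hexp : ∀ z, g i z * ∑ k, w (e k) * mGumbelPdf (μ (e k)) σ z =
        ∑ k, w (e k) * (g i z * mGumbelPdf (μ (e k)) σ z) := fun z => by
      rw [Finset.mul_sum]
      exact Finset.sum_congr rfl fun k _ => by ring
    simp_rw [hexp]
    rw [integral_finsetSum _ fun k _ => (hgφ i _ hσ).const_mul _]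
    simp_rw [integral_const_mul]
    exact hsum.symm

end Moments

/-! ### Properties of the choice problem -/

section Choice

variable {J : ℕ}

lemma continuous_epsExt (j : Fin (J + 1)) : Continuous fun z : Fin J → ℝ => epsExt z j := by
  refine Fin.cases ?_ (fun i => ?_) j
  · exact continuous_const
  · exact continuous_apply i

lemma abs_epsExt_le (z : Fin J → ℝ) (j : Fin (J + 1)) : |epsExt z j| ≤ ‖z‖ := by
  refine Fin.cases ?_ (fun i => ?_) j
  · simp [epsExt]
  · exact norm_le_pi_norm z i

lemma epsExt_add_smul (a b : ℝ) (y z : Fin J → ℝ) (j : Fin (J + 1)) :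
    epsExt (a • y + b • z) j = a * epsExt y j + b * epsExt z j := by
  refine Fin.cases ?_ (fun i => ?_) j <;> simp [epsExt]

lemma abs_sup'_add_epsExt_le (v : Fin (J + 1) → ℝ) (z : Fin J → ℝ) :
    |Finset.univ.sup' Finset.univ_nonempty fun j => v j + epsExt z j| ≤
      (1 + ∑ j, |v j|) * (1 + ‖z‖) := by
  have hS : 0 ≤ ∑ j, |v j| := Finset.sum_nonneg fun _ _ => abs_nonneg _
  have hb : ∀ j, |v j + epsExt z j| ≤ (1 + ∑ j, |v j|) * (1 + ‖z‖) := fun j => by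
    have h1 := abs_add_le (v j) (epsExt z j)
    have h2 := abs_epsExt_le z j
    have h3 : |v j| ≤ ∑ j, |v j| := Finset.single_le_sum (f := fun j => |v j|)
      (fun _ _ => abs_nonneg _) (Finset.mem_univ j)
    nlinarith [mul_nonneg hS (norm_nonneg z)]
  obtain ⟨j, -, hj⟩ := Finset.exists_mem_eq_sup' Finset.univ_nonempty
    fun j => v j + epsExt z j
  rw [hj]
  exact hb j

/-- The set of shocks for which alternative `d` is optimal given choice-specific values `v`. -/
def choiceRegion (v : Fin (J + 1) → ℝ) (d : Fin (J + 1)) : Set (Fin J → ℝ) :=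
  {z | ∀ j, v j + epsExt z j ≤ v d + epsExt z d}

lemma isClosed_choiceRegion (v : Fin (J + 1) → ℝ) (d : Fin (J + 1)) :
    IsClosed (choiceRegion v d) := by
  rw [choiceRegion, Set.ofPred_forall]
  exact isClosed_iInter fun j => isClosed_le (continuous_const.add (continuous_epsExt j))
    (continuous_const.add (continuous_epsExt d))

lemma convex_choiceRegion (v : Fin (J + 1) → ℝ) (d : Fin (J + 1)) :
    Convex ℝ (choiceRegion v d) := by
  intro y hy z hz a b ha hb hab j
  rw [epsExt_add_smul, epsExt_add_smul]
  have h1 := mul_le_mul_of_nonneg_left (hy j) ha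
  have h2 := mul_le_mul_of_nonneg_left (hz j) hb
  have hj : v j = a * v j + b * v j := by rw [← add_mul, hab, one_mul]
  have hd : v d = a * v d + b * v d := by rw [← add_mul, hab, one_mul]
  linarith

lemma ae_continuousAt_indicator_choiceRegion (v : Fin (J + 1) → ℝ) (d : Fin (J + 1)) :
    ∀ᵐ z, ContinuousAt ((choiceRegion v d).indicator fun _ => (1 : ℝ)) z := by
  have h := (convex_choiceRegion v d).addHaar_frontier volume
  filter_upwards [measure_eq_zero_iff_ae_notMem.1 h] with z hz
  exact continuousOn_const.continuousAt_indicator hz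

end Choice

/-- Exact matching of conditional choice probabilities: for any shock distribution with a
positive density, there is a finite Gumbel mixture generating the same CCPs. -/
theorem exact_matching_of_ccps
    (K J : ℕ) (hK : 1 ≤ K) (hJ : 1 ≤ J)
    (u : Fin K → Fin (J + 1) → ℝ) (β : ℝ) (hβ0 : 0 ≤ β) (hβ1 : β < 1)
    (G : Fin (J + 1) → Fin K → Fin K → ℝ)
    (hGpos : ∀ d x y, 0 ≤ G d x y) (hGsum : ∀ d x, ∑ y, G d x y = 1)
    -- the data generating shock distribution `F₀` has a positive density `f0`
    (f0 : (Fin J → ℝ) → ℝ)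
    (hf0meas : Measurable f0) (hf0pos : ∀ z, 0 < f0 z)
    (hf0int : Integrable f0) (hf0prob : ∫ z, f0 z = 1)
    (hf0mom : ∀ j, Integrable fun z : Fin J → ℝ => |z j| * f0 z)
    -- `Q0` solves the Bellman equation under `F₀`
    (Q0 : Fin K → ℝ)
    (hQ0 : ∀ x, Q0 x = ∫ z : Fin J → ℝ,
      (Finset.univ.sup' Finset.univ_nonempty
        (fun j : Fin (J + 1) => u x j + β * ∑ y, G j x y * Q0 y + epsExt z j)) * f0 z) :
    -- there is a finite Gumbel mixture with the same CCPs
    ∃ (m : ℕ) (ω : Fin m → ℝ) (μ : Fin m → Fin J → ℝ) (σ : ℝ) (Q1 : Fin K → ℝ),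
      1 ≤ m ∧ (∀ k, 0 < ω k) ∧ (∑ k, ω k = 1) ∧ 0 < σ ∧
      (∀ x, Q1 x = ∫ z : Fin J → ℝ,
        (Finset.univ.sup' Finset.univ_nonempty
          (fun j : Fin (J + 1) => u x j + β * ∑ y, G j x y * Q1 y + epsExt z j)) *
            (∑ k, ω k * mGumbelPdf (μ k) σ z)) ∧
      ∀ (d : Fin (J + 1)) (x : Fin K),
        (∫ z in {z : Fin J → ℝ | ∀ j : Fin (J + 1),
            u x j + β * ∑ y, G j x y * Q0 y + epsExt z j ≤
              u x d + β * ∑ y, G d x y * Q0 y + epsExt z d}, f0 z) =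
        (∫ z in {z : Fin J → ℝ | ∀ j : Fin (J + 1),
            u x j + β * ∑ y, G j x y * Q1 y + epsExt z j ≤
              u x d + β * ∑ y, G d x y * Q1 y + epsExt z d},
          (∑ k, ω k * mGumbelPdf (μ k) σ z)) := by
  let v : Fin K → Fin (J + 1) → ℝ := fun x j => u x j + β * ∑ y, G j x y * Q0 y
  let g : Fin K ⊕ (Fin (J + 1) × Fin K) → (Fin J → ℝ) → ℝ := Sum.elim
    (fun x z => Finset.univ.sup' Finset.univ_nonempty fun j => v x j + epsExt z j)
    (fun p => (choiceRegion (v p.2) p.1).indicator fun _ => 1)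
  have hsup : ∀ x, Continuous (g (Sum.inl x)) := fun x =>
    Continuous.finset_sup'_apply Finset.univ_nonempty fun j _ => continuous_const.add (continuous_epsExt j)
  have hmeas : ∀ p : Fin (J + 1) × Fin K, MeasurableSet (choiceRegion (v p.2) p.1) :=
    fun p => (isClosed_choiceRegion _ _).measurableSet
  obtain ⟨m, ω, μ, σ, hm, hω, hω1, hσ, hmatch⟩ := exists_gumbel_mixture_matching (g := g)
    hf0meas hf0pos hf0int hf0prob hf0mom
    (by
      rintro (x | p)
      · exact (hsup x).measurable
      · exact measurable_const.indicator (hmeas p))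
    (by
      rintro (x | p)
      · exact ⟨_, fun z => abs_sup'_add_epsExt_le (v x) z⟩
      · refine ⟨1, fun z => ?_⟩
        have h1 : |g (Sum.inr p) z| ≤ 1 := by
          simpa [g] using norm_indicator_le_norm_self (s := choiceRegion (v p.2) p.1)
            (fun _ => (1 : ℝ)) z
        linarith [norm_nonneg z])
    (by
      rintro (x | p)
      · exact ae_of_all _ fun z => (hsup x).continuousAt
      · exact ae_continuousAt_indicator_choiceRegion _ _)
  refine ⟨m, ω, μ, σ, Q0, hm, hω, hω1, hσ, fun x => ?_, fun d x => ?_⟩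
  · exact (hQ0 x).trans (hmatch (Sum.inl x))
  · have hind : ∀ f : (Fin J → ℝ) → ℝ,
        ∫ z, g (Sum.inr (d, x)) z * f z = ∫ z in choiceRegion (v x) d, f z := fun f => by
      rw [← integral_indicator (hmeas (d, x))]
      refine integral_congr_ae (ae_of_all _ fun z => ?_)
      by_cases hz : z ∈ choiceRegion (v x) d <;> simp [g, hz]
    have := hmatch (Sum.inr (d, x))
    rw [hind, hind] at this
    exact this
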